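/- For a finite graph G, the determinant of the signless Laplacian Q = D + A equals Σ_H 4^{c(H)}, where the sum runs over all spanning subgraphs H of G each of whose connected components is an odd-unicyclic graph (contains exactly one cycle, of odd length), and c(H) is the number of components of H. -/

import Mathlib

/-- A finite connected graph is odd-unicyclic if it has exactly one cycle
(equivalently, as many edges as vertices) and every cycle in it has odd
length. -/
def IsOddUnicyclic {W : Type*} (K : SimpleGraph W) : Prop :=
  K.Connected ∧ K.edgeSet.ncard = Nat.card W ∧
    ∀ (v : W) (w : K.Walk v v), w.IsCycle → Odd w.length

/-- Every connected component of `H` induces an odd-unicyclic graph. -/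
def AllCompsOddUnicyclic {V : Type*} (H : SimpleGraph V) : Prop :=
  ∀ c : H.ConnectedComponent, IsOddUnicyclic (H.induce c.supp)

/-!
The signless Laplacian is a sum of rank-one matrices, `Q(G) = ∑ₑ xₑ xₑᵀ`, where `xₑ` is the
indicator vector of the two ends of `e`. By the Cauchy–Binet formula `det Q(G)` is therefore the
sum of `det Q(H)` over the spanning subgraphs `H` with as many edges as vertices, and `det Q(H)` is
the product of `det Q(c)` over the components `c` of `H`. A component with fewer edges than
vertices contributes `0`, so only those `H` matter whose components are all unicyclic.

For a connected unicyclic `K` with a cycle through the edge `pq`, root the tree `K - pq` at `p`,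
send each other vertex to its parent and send `p` to `q`. This gives `Q(K) = Nᵀ N` with `N` square.
Eliminating along the tree path from `q` to `p` gives `det N = 1 - (-1) ^ ℓ`, where `ℓ` is the
length of the cycle. Hence `det Q(K)` is `4` or `0` according to the parity of `ℓ`.
-/

section Determinants

open Finset Matrix

variable {m ι R : Type*} [Fintype m] [DecidableEq m] [CommRing R]

lemma det_sum_vecMulVec_eq_sum_injective [DecidableEq ι] (s : Finset ι) (a b : ι → m → R) :
    (∑ i ∈ s, vecMulVec (a i) (b i)).det =
      ∑ f ∈ Fintype.piFinset (fun _ : m ↦ s) with Function.Injective f,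
        (∏ v, a (f v) v) * (of fun v ↦ b (f v)).det := by
  have rows : ∑ i ∈ s, vecMulVec (a i) (b i) = of fun v ↦ ∑ i ∈ s, a i v • b i := by
    ext v w
    simp [Matrix.sum_apply, vecMulVec_apply]
  have expand : (∑ i ∈ s, vecMulVec (a i) (b i)).det =
      ∑ f ∈ Fintype.piFinset (fun _ : m ↦ s), (∏ v, a (f v) v) * (of fun v ↦ b (f v)).det := by
    rw [rows]
    refine (detRowAlternating.toMultilinearMap.map_sum_finset _ _).trans ?_
    refine sum_congr rfl fun f _ ↦ ?_
    exact detRowAlternating.toMultilinearMap.map_smul_univ _ _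
  rw [expand, sum_filter_of_ne]
  intro f _ hf v w hvw
  by_contra hne
  exact hf (by rw [det_zero_of_row_eq hne (congrArg b hvw), mul_zero])

/-- The Cauchy–Binet formula: the summand of `t` is the product of the two minors indexed by `t`. -/
theorem det_sum_vecMulVec (s : Finset ι) (a b : ι → m → R) :
    (∑ i ∈ s, vecMulVec (a i) (b i)).det =
      ∑ t ∈ s.powersetCard (Fintype.card m), (∑ i ∈ t, vecMulVec (a i) (b i)).det := by
  classical
  simp_rw [det_sum_vecMulVec_eq_sum_injective]
  have image_mem : ∀ f ∈ {f ∈ Fintype.piFinset (fun _ : m ↦ s) | Function.Injective f},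
      univ.image f ∈ s.powersetCard (Fintype.card m) := by
    intro f hf
    rw [mem_filter, Fintype.mem_piFinset] at hf
    rw [mem_powersetCard, card_image_of_injective _ hf.2, card_univ]
    exact ⟨image_subset_iff.2 fun v _ ↦ hf.1 v, rfl⟩
  rw [← sum_fiberwise_of_maps_to image_mem]
  refine sum_congr rfl fun t ht ↦ sum_congr ?_ fun _ _ ↦ rfl
  obtain ⟨hts, htcard⟩ := mem_powersetCard.1 ht
  ext f
  simp only [mem_filter, Fintype.mem_piFinset]
  constructor
  · rintro ⟨⟨-, hinj⟩, rfl⟩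
    exact ⟨fun v ↦ mem_image_of_mem f (mem_univ v), hinj⟩
  · rintro ⟨hft, hinj⟩
    refine ⟨⟨fun v ↦ hts (hft v), hinj⟩, eq_of_subset_of_card_le ?_ ?_⟩
    · exact image_subset_iff.2 fun v _ ↦ hft v
    · rw [card_image_of_injective _ hinj, card_univ, htcard]

lemma det_eq_one_of_unitriangular {α : Type*} [LinearOrder α] (M : Matrix m m R) (r : m → α)
    (diag : ∀ i, M i i = 1) (lower : ∀ i j, i ≠ j → r i ≤ r j → M i j = 0) : M.det = 1 := by
  have triangular : M.BlockTriangular (OrderDual.toDual ∘ r) := fun i j hij ↦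
    lower i j (fun h ↦ hij.ne (by rw [h])) (OrderDual.toDual_lt_toDual.1 hij).le
  rw [triangular.det]
  refine prod_eq_one fun k _ ↦ ?_
  suffices M.toSquareBlock (OrderDual.toDual ∘ r) k = 1 by rw [this, det_one]
  ext i j
  obtain rfl | hij := eq_or_ne i j
  · simp [toSquareBlock_def, diag]
  · rw [one_apply_ne hij]
    refine lower i j (Subtype.coe_injective.ne hij) (le_of_eq ?_)
    exact OrderDual.toDual.injective (i.2.trans j.2.symm)

section Parent

variable (R) (f : m → m)

/-- The vertex–edge incidence matrix of the graph with edges `s(v, f v)`, where the edge `s(v, f v)`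
is identified with `v` and indexes a row. -/
def functionIncMatrix : Matrix m m R := of fun v ↦ Pi.single v 1 + Pi.single (f v) 1

omit [Fintype m] in
lemma functionIncMatrix_row (v : m) :
    functionIncMatrix R f v = Pi.single v 1 + Pi.single (f v) 1 := rfl

variable {f} {p : m} {r : m → ℕ}

lemma det_updateRow_functionIncMatrix (root : r p = 0) (parent : ∀ v ≠ p, r v = r (f v) + 1)
    (w : m) : ((functionIncMatrix R f).updateRow p (Pi.single w 1)).det = (-1) ^ r w := by
  induction hw : r w generalizing w with
  | zero =>
    obtain rfl : w = p := by
      by_contra hne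
      have := parent w hne
      omega
    rw [pow_zero]
    refine det_eq_one_of_unitriangular _ r (fun i ↦ ?_) fun i j hij hr ↦ ?_
    · obtain rfl | hi := eq_or_ne i w
      · simp
      · have : f i ≠ i := fun h ↦ by simpa [h] using parent i hi
        simp [functionIncMatrix, updateRow_ne hi, this.symm]
    · obtain rfl | hi := eq_or_ne i w
      · simp [hij.symm]
      · have : j ≠ f i := by
          rintro rfl
          have := parent i hi
          omega
        simp [functionIncMatrix, updateRow_ne hi, hij.symm, this]
  | succ k ih =>
    have hne : w ≠ p := by
      rintro rfl
      omega
    have row_w : (Pi.single w 1 : m → R) =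
        functionIncMatrix R f w + (-1 : R) • Pi.single (f w) 1 := by
      rw [functionIncMatrix_row, neg_one_smul, add_neg_cancel_right]
    have ih_parent := ih (f w) (by have := parent w hne; omega)
    rw [row_w, det_updateRow_add, det_updateRow_smul, det_updateRow_eq_zero hne, ih_parent,
      zero_add, pow_succ']

lemma det_functionIncMatrix (root : r p = 0) (parent : ∀ v ≠ p, r v = r (f v) + 1) :
    (functionIncMatrix R f).det = 1 + (-1) ^ r (f p) := by
  rw [← updateRow_eq_self (functionIncMatrix R f) p, functionIncMatrix_row, det_updateRow_add,
    det_updateRow_functionIncMatrix R root parent, det_updateRow_functionIncMatrix R root parent,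
    root, pow_zero]

end Parent

end Determinants

section Graphs

open Finset Matrix SimpleGraph

variable {V : Type*} {T K : SimpleGraph V}

lemma exists_parent_of_connected (hT : T.Connected) (p : V) :
    ∃ f : V → V, ∀ v ≠ p, T.Adj v (f v) ∧ T.dist v p = T.dist (f v) p + 1 := by
  suffices ∀ v, v ≠ p → ∃ u, T.Adj v u ∧ T.dist v p = T.dist u p + 1 by
    choose! f hf using this
    exact ⟨f, hf⟩
  intro v hv
  obtain ⟨w, hw⟩ := hT.exists_walk_length_eq_dist v p
  cases w with
  | nil => exact absurd rfl hv
  | @cons _ u _ hvu w =>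
    refine ⟨u, hvu, ?_⟩
    have upper := T.dist_le w
    have lower := hT.dist_triangle (u := v) (v := u) (w := p)
    rw [dist_eq_one_iff_adj.2 hvu] at lower
    rw [Walk.length_cons] at hw
    omega

lemma length_eq_dist_of_isPath (hT : T.IsAcyclic) {u v : V} {w : T.Walk u v} (hw : w.IsPath) :
    w.length = T.dist u v := by
  obtain ⟨w', hw', hlength⟩ := w.reachable.exists_path_of_dist
  have unique : w = w' := congrArg Subtype.val ((hT.subsingleton_path u v).elim ⟨w, hw⟩ ⟨w', hw'⟩)
  rw [unique, hlength]

lemma not_isBridge_of_isCycle_cons {u v : V} {h : K.Adj u v} {w : K.Walk v u}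
    (hw : (w.cons h).IsCycle) : ¬ K.IsBridge s(u, v) := by
  rw [isBridge_iff_forall_cycle_notMem h]
  exact fun hbridge ↦ hbridge _ hw (by simp)

lemma isTree_deleteEdges_of_isCycle_cons [Finite V] (hK : K.Connected)
    (hcard : K.edgeSet.ncard = Nat.card V) {u v : V} {h : K.Adj u v} {w : K.Walk v u}
    (hw : (w.cons h).IsCycle) : (K.deleteEdges {s(u, v)}).IsTree := by
  rw [isTree_iff_connected_and_card, Nat.card_coe_set_eq, K.edgeSet_deleteEdges,
    Set.ncard_sdiff_singleton_add_one (K.mem_edgeSet.2 h) (Set.toFinite _)]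
  exact ⟨hK.connected_delete_edge_of_not_isBridge (not_isBridge_of_isCycle_cons hw), hcard⟩

lemma dist_deleteEdges_of_isCycle_cons [Finite V] (hK : K.Connected)
    (hcard : K.edgeSet.ncard = Nat.card V) {u v : V} {h : K.Adj u v} {w : K.Walk v u}
    (hw : (w.cons h).IsCycle) : (K.deleteEdges {s(u, v)}).dist v u = w.length := by
  have hT := isTree_deleteEdges_of_isCycle_cons hK hcard hw
  obtain ⟨hpath, hnotMem⟩ := (Walk.cons_isCycle_iff w h).1 hw
  have hedges : ∀ e ∈ w.edges, e ∈ (K.deleteEdges {s(u, v)}).edgeSet := by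
    intro e he
    rw [edgeSet_deleteEdges]
    exact ⟨w.edges_subset_edgeSet he, fun heq ↦ hnotMem (heq ▸ he)⟩
  rw [← length_eq_dist_of_isPath hT.isAcyclic (hpath.transfer hedges), Walk.length_transfer]

lemma exists_isCycle_of_ncard_edgeSet_eq [Finite V] (hK : K.Connected)
    (hcard : K.edgeSet.ncard = Nat.card V) : ∃ (v : V) (w : K.Walk v v), w.IsCycle := by
  by_contra! hcycle
  have hT := isTree_iff_connected_and_card.1 ⟨hK, hcycle⟩
  rw [Nat.card_coe_set_eq] at hT
  omega

lemma edge_parent_injOn {f : V → V} {p : V} {r : V → ℕ} (parent : ∀ v ≠ p, r v = r (f v) + 1) :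
    Set.InjOn (fun v ↦ s(v, f v)) {p}ᶜ := by
  intro v hv w hw hvw
  rcases Sym2.eq_iff.1 hvw with ⟨h, -⟩ | ⟨hfw, hfv⟩
  · exact h
  · have := parent v hv
    have := parent w hw
    grind

lemma exists_parent_of_isCycle_cons [Finite V] (hK : K.Connected)
    (hcard : K.edgeSet.ncard = Nat.card V) {p q : V} {h : K.Adj p q} {w : K.Walk q p}
    (hw : (w.cons h).IsCycle) :
    ∃ f : V → V, f p = q ∧ (∀ v, K.Adj v (f v)) ∧ Function.Injective (fun v ↦ s(v, f v)) ∧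
      ∀ v ≠ p, (K.deleteEdges {s(p, q)}).dist v p = (K.deleteEdges {s(p, q)}).dist (f v) p + 1 := by
  classical
  obtain ⟨g, hg⟩ := exists_parent_of_connected
    (isTree_deleteEdges_of_isCycle_cons hK hcard hw).connected p
  simp only [deleteEdges_adj, Set.mem_singleton_iff] at hg
  have f_root : Function.update g p q p = q := Function.update_self ..
  have f_ne {v : V} (hv : v ≠ p) : Function.update g p q v = g v := Function.update_of_ne hv ..
  refine ⟨Function.update g p q, f_root, fun v ↦ ?_, fun v v' hvv' ↦ ?_, fun v hv ↦ ?_⟩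
  · by_cases hv : v = p
    · rwa [hv, f_root]
    · rw [f_ne hv]
      exact (hg v hv).1.1
  · simp only at hvv'
    by_cases hv : v = p <;> by_cases hv' : v' = p
    · rw [hv, hv']
    · rw [hv, f_root, f_ne hv'] at hvv'
      exact absurd hvv'.symm (hg v' hv').1.2
    · rw [hv', f_root, f_ne hv] at hvv'
      exact absurd hvv' (hg v hv).1.2
    · rw [f_ne hv, f_ne hv'] at hvv'
      exact edge_parent_injOn (fun v hv ↦ (hg v hv).2) hv hv' hvv'
  · rw [f_ne hv]
    exact (hg v hv).2

lemma ncard_edgeSet_eq_card_edgeFinset (K : SimpleGraph V) [Fintype K.edgeSet] :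
    K.edgeSet.ncard = #K.edgeFinset := by
  rw [← Set.ncard_coe_finset, coe_edgeFinset]

lemma sum_degree_eq_two_mul_ncard_edgeSet (K : SimpleGraph V) [Fintype V] [DecidableRel K.Adj] :
    ∑ v, K.degree v = 2 * K.edgeSet.ncard := by
  rw [K.sum_degrees_eq_twice_card_edges, ncard_edgeSet_eq_card_edgeFinset]

open scoped Classical in
lemma exists_edgeFinset_eq_of_subset [Fintype V] [Fintype K.edgeSet] {t : Finset (Sym2 V)}
    (ht : t ⊆ K.edgeFinset) : ∃ H : SimpleGraph V, H.edgeFinset = t := by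
  refine ⟨fromEdgeSet t, ?_⟩
  rw [← coe_inj, coe_edgeFinset, edgeSet_fromEdgeSet, sdiff_eq_left, Set.disjoint_left]
  exact fun e he ↦ K.not_isDiag_of_mem_edgeSet (mem_edgeFinset.1 (ht he))

section Components

variable (H : SimpleGraph V)

lemma sum_sum_supp [Fintype V] [Fintype H.ConnectedComponent]
    [∀ c : H.ConnectedComponent, Fintype c.supp] {M : Type*} [AddCommMonoid M] (f : V → M) :
    ∑ c : H.ConnectedComponent, ∑ v : c.supp, f v = ∑ v, f v := by
  classical
  rw [← sum_fiberwise univ H.connectedComponentMk f]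
  refine sum_congr rfl fun c _ ↦ (sum_subtype _ (fun v ↦ ?_) f).symm
  rw [mem_filter_univ, ConnectedComponent.mem_supp_iff]

variable {H} in
lemma degree_induce_supp [Fintype V] [DecidableRel H.Adj] {c : H.ConnectedComponent}
    [DecidablePred (· ∈ c.supp)] (v : c.supp) : (H.induce c.supp).degree v = H.degree v :=
  degree_induce_of_neighborSet_subset fun _ ↦ c.mem_supp_of_adj_mem_supp v.2

lemma sum_ncard_edgeSet_induce_supp [Finite V] [Fintype H.ConnectedComponent] :
    ∑ c : H.ConnectedComponent, (H.induce c.supp).edgeSet.ncard = H.edgeSet.ncard := by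
  classical
  have := Fintype.ofFinite V
  refine mul_left_cancel₀ two_ne_zero ?_
  simp_rw [mul_sum, ← sum_degree_eq_two_mul_ncard_edgeSet, degree_induce_supp]
  exact sum_sum_supp H fun v ↦ H.degree v

lemma sum_card_supp [Finite V] [Fintype H.ConnectedComponent] :
    ∑ c : H.ConnectedComponent, Nat.card c.supp = Nat.card V := by
  classical
  have := Fintype.ofFinite V
  simp_rw [Nat.card_eq_fintype_card, Fintype.card_eq_sum_ones]
  exact sum_sum_supp H fun _ ↦ 1

variable {H}

lemma ncard_edgeSet_of_allCompsOddUnicyclic [Finite V] (hH : AllCompsOddUnicyclic H) :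
    H.edgeSet.ncard = Nat.card V := by
  classical
  have := Fintype.ofFinite V
  rw [← sum_ncard_edgeSet_induce_supp, ← sum_card_supp H]
  exact sum_congr rfl fun c _ ↦ (hH c).2.1

lemma exists_ncard_edgeSet_induce_supp_lt_or_forall_eq [Finite V]
    (hcard : H.edgeSet.ncard = Nat.card V) :
    (∃ c : H.ConnectedComponent, (H.induce c.supp).edgeSet.ncard < Nat.card c.supp) ∨
      ∀ c : H.ConnectedComponent, (H.induce c.supp).edgeSet.ncard = Nat.card c.supp := by
  classical
  have := Fintype.ofFinite V
  refine or_iff_not_imp_left.2 fun hle c ↦ ?_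
  push Not at hle
  rw [← sum_ncard_edgeSet_induce_supp, ← sum_card_supp H] at hcard
  exact ((sum_eq_sum_iff_of_le fun c _ ↦ hle c).1 hcard.symm c (mem_univ c)).symm

end Components

section SignlessLaplacian

variable (R : Type*) [CommRing R] [DecidableEq V]

/-- The signless Laplacian `D + A` of a graph. -/
def signlessLapMatrix [Fintype V] (G : SimpleGraph V) [DecidableRel G.Adj] : Matrix V V R :=
  G.degMatrix R + G.adjMatrix R

lemma signlessLapMatrix_apply [Fintype V] (G : SimpleGraph V) [DecidableRel G.Adj] (v w : V) :
    signlessLapMatrix R G v w =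
      (if v = w then (G.degree v : R) else 0) + if G.Adj v w then 1 else 0 := by
  simp [signlessLapMatrix, degMatrix, diagonal_apply]

/-- The indicator vector of the ends of an edge, that is, a column of the incidence matrix. The
signless Laplacian is the sum of the outer squares of these vectors. -/
def edgeVec (e : Sym2 V) : V → R := fun v ↦ if v ∈ e then 1 else 0

lemma edgeVec_mk {u v : V} (huv : u ≠ v) :
    edgeVec R s(u, v) = Pi.single u 1 + Pi.single v 1 := by
  ext w
  simp only [edgeVec, Sym2.mem_iff, Pi.add_apply, Pi.single_apply]
  grind

variable [Fintype V]

lemma signlessLapMatrix_eq_sum_vecMulVec (G : SimpleGraph V) [DecidableRel G.Adj] :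
    signlessLapMatrix R G = ∑ e ∈ G.edgeFinset, vecMulVec (edgeVec R e) (edgeVec R e) := by
  ext v w
  simp only [signlessLapMatrix_apply, Matrix.sum_apply, vecMulVec_apply, edgeVec, mul_ite, mul_one,
    mul_zero, ← ite_and, sum_boole]
  obtain rfl | hvw := eq_or_ne v w
  · simp [← incidenceFinset_eq_filter]
  · simp only [Sym2.mem_and_mem_iff hvw.symm, filter_eq', mem_edgeFinset,
      mem_edgeSet, G.adj_comm w v, if_neg hvw, zero_add]
    split_ifs <;> simp

open scoped Classical in
theorem det_signlessLapMatrix_eq_sum_subgraphs (G : SimpleGraph V) [DecidableRel G.Adj] :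
    (signlessLapMatrix R G).det =
      ∑ H : SimpleGraph V with H ≤ G ∧ H.edgeSet.ncard = Nat.card V,
        (signlessLapMatrix R H).det := by
  have mem_iff (H : SimpleGraph V) : H.edgeFinset ∈ G.edgeFinset.powersetCard (Fintype.card V) ↔
      H ∈ ({H | H ≤ G ∧ H.edgeSet.ncard = Nat.card V} : Finset (SimpleGraph V)) := by
    rw [mem_powersetCard, mem_filter_univ, edgeFinset_subset_edgeFinset,
      ncard_edgeSet_eq_card_edgeFinset, Nat.card_eq_fintype_card]
  rw [signlessLapMatrix_eq_sum_vecMulVec, det_sum_vecMulVec]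
  symm
  refine sum_nbij (fun H ↦ H.edgeFinset) (fun H ↦ (mem_iff H).2) ?_ ?_ fun H _ ↦ ?_
  · exact fun H _ H' _ ↦ edgeFinset_inj.1
  · intro t ht
    obtain ⟨H, rfl⟩ := exists_edgeFinset_eq_of_subset (mem_powersetCard.1 ht).1
    exact ⟨H, (mem_iff H).1 ht, rfl⟩
  · rw [signlessLapMatrix_eq_sum_vecMulVec]

lemma det_signlessLapMatrix_of_ncard_edgeSet_lt (K : SimpleGraph V) [DecidableRel K.Adj]
    (hK : K.edgeSet.ncard < Nat.card V) : (signlessLapMatrix R K).det = 0 := by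
  rw [signlessLapMatrix_eq_sum_vecMulVec, det_sum_vecMulVec, powersetCard_eq_empty.2, sum_empty]
  rwa [← Nat.card_eq_fintype_card, ← ncard_edgeSet_eq_card_edgeFinset]

lemma signlessLapMatrix_eq_transpose_mul (K : SimpleGraph V) [DecidableRel K.Adj]
    (hcard : K.edgeSet.ncard = Nat.card V) {f : V → V} (adj : ∀ v, K.Adj v (f v))
    (inj : Function.Injective fun v ↦ s(v, f v)) :
    signlessLapMatrix R K = (functionIncMatrix R f)ᵀ * functionIncMatrix R f := by
  have edges : K.edgeFinset = univ.image fun v ↦ s(v, f v) := by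
    refine (eq_of_subset_of_card_le (image_subset_iff.2 fun v _ ↦ ?_) ?_).symm
    · simpa using adj v
    · rw [card_image_of_injective _ inj, card_univ, ← Nat.card_eq_fintype_card, ← hcard,
        ncard_edgeSet_eq_card_edgeFinset]
  rw [signlessLapMatrix_eq_sum_vecMulVec, edges, sum_image inj.injOn]
  ext v w
  simp only [Matrix.sum_apply, mul_apply, transpose_apply, vecMulVec_apply,
    edgeVec_mk R (adj _).ne, functionIncMatrix_row]

theorem det_signlessLapMatrix_of_isCycle (K : SimpleGraph V) [DecidableRel K.Adj]
    (hK : K.Connected) (hcard : K.edgeSet.ncard = Nat.card V) {v : V} {w : K.Walk v v}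
    (hw : w.IsCycle) : (signlessLapMatrix R K).det = (1 - (-1) ^ w.length) ^ 2 := by
  cases w with
  | nil => exact absurd hw Walk.not_isCycle_nil
  | @cons _ q _ h w =>
    obtain ⟨f, root, adj, inj, parent⟩ := exists_parent_of_isCycle_cons hK hcard hw
    rw [signlessLapMatrix_eq_transpose_mul R K hcard adj inj, det_mul, det_transpose,
      det_functionIncMatrix R (r := fun x ↦ (K.deleteEdges {s(v, q)}).dist x v)
        SimpleGraph.dist_self parent, root,
      dist_deleteEdges_of_isCycle_cons hK hcard hw, Walk.length_cons]
    ring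

theorem det_signlessLapMatrix_of_isOddUnicyclic (K : SimpleGraph V) [DecidableRel K.Adj]
    (hK : IsOddUnicyclic K) : (signlessLapMatrix R K).det = 4 := by
  obtain ⟨hconn, hcard, hodd⟩ := hK
  obtain ⟨v, w, hw⟩ := exists_isCycle_of_ncard_edgeSet_eq hconn hcard
  rw [det_signlessLapMatrix_of_isCycle R K hconn hcard hw, (hodd v w hw).neg_one_pow]
  norm_num

theorem det_signlessLapMatrix_of_not_isOddUnicyclic (K : SimpleGraph V) [DecidableRel K.Adj]
    (hconn : K.Connected) (hcard : K.edgeSet.ncard = Nat.card V) (hK : ¬ IsOddUnicyclic K) :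
    (signlessLapMatrix R K).det = 0 := by
  simp only [IsOddUnicyclic, hconn, hcard, true_and, not_forall, Nat.not_odd_iff_even] at hK
  obtain ⟨v, w, hw, heven⟩ := hK
  rw [det_signlessLapMatrix_of_isCycle R K hconn hcard hw, heven.neg_one_pow]
  norm_num

lemma signlessLapMatrix_induce_supp (H : SimpleGraph V) [DecidableRel H.Adj]
    (c : H.ConnectedComponent) [DecidablePred (· ∈ c.supp)] :
    signlessLapMatrix R (H.induce c.supp) =
      (signlessLapMatrix R H).submatrix Subtype.val Subtype.val := by
  ext v w
  simp [signlessLapMatrix_apply, degree_induce_supp, Subtype.ext_iff]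

lemma blockTriangular_signlessLapMatrix (H : SimpleGraph V) [DecidableRel H.Adj]
    [LinearOrder H.ConnectedComponent] :
    (signlessLapMatrix R H).BlockTriangular H.connectedComponentMk := by
  intro v w hvw
  have hne : v ≠ w := fun h ↦ hvw.ne (by rw [h])
  have hadj : ¬ H.Adj v w := fun h ↦ hvw.ne (ConnectedComponent.sound h.symm.reachable)
  rw [signlessLapMatrix_apply, if_neg hne, if_neg hadj, add_zero]

open scoped Classical in
theorem det_signlessLapMatrix_eq_prod_components (H : SimpleGraph V) [DecidableRel H.Adj] :
    (signlessLapMatrix R H).det =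
      ∏ c : H.ConnectedComponent, (signlessLapMatrix R (H.induce c.supp)).det := by
  let : LinearOrder H.ConnectedComponent :=
    LinearOrder.lift' (Fintype.equivFin H.ConnectedComponent) (Equiv.injective _)
  refine (blockTriangular_signlessLapMatrix R H).det_fintype.trans (prod_congr rfl fun c _ ↦ ?_)
  rw [signlessLapMatrix_induce_supp]
  congr!

theorem det_signlessLapMatrix_of_allCompsOddUnicyclic (H : SimpleGraph V) [DecidableRel H.Adj]
    (hH : AllCompsOddUnicyclic H) :
    (signlessLapMatrix R H).det = 4 ^ Nat.card H.ConnectedComponent := by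
  classical
  rw [det_signlessLapMatrix_eq_prod_components, Nat.card_eq_fintype_card, ← card_univ]
  exact prod_eq_pow_card fun c _ ↦ det_signlessLapMatrix_of_isOddUnicyclic R _ (hH c)

theorem det_signlessLapMatrix_of_not_allCompsOddUnicyclic (H : SimpleGraph V) [DecidableRel H.Adj]
    (hcard : H.edgeSet.ncard = Nat.card V) (hH : ¬ AllCompsOddUnicyclic H) :
    (signlessLapMatrix R H).det = 0 := by
  classical
  suffices ∃ c : H.ConnectedComponent, (signlessLapMatrix R (H.induce c.supp)).det = 0 by
    obtain ⟨c, hc⟩ := this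
    rw [det_signlessLapMatrix_eq_prod_components]
    exact prod_eq_zero (mem_univ c) hc
  rcases exists_ncard_edgeSet_induce_supp_lt_or_forall_eq hcard with ⟨c, hc⟩ | hcomp
  · exact ⟨c, det_signlessLapMatrix_of_ncard_edgeSet_lt R _ hc⟩
  · obtain ⟨c, hc⟩ := not_forall.1 hH
    exact ⟨c, det_signlessLapMatrix_of_not_isOddUnicyclic R _ c.connected_toSimpleGraph
      (hcomp c) hc⟩

open scoped Classical in
theorem stmt_13_general (G : SimpleGraph V) [DecidableRel G.Adj] :
    (signlessLapMatrix R G).det =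
      ∑ H : SimpleGraph V,
        if H ≤ G ∧ AllCompsOddUnicyclic H then (4 : R) ^ Nat.card H.ConnectedComponent else 0 := by
  rw [det_signlessLapMatrix_eq_sum_subgraphs, sum_filter]
  refine sum_congr rfl fun H _ ↦ ?_
  by_cases hH : AllCompsOddUnicyclic H
  · simp only [ncard_edgeSet_of_allCompsOddUnicyclic hH, hH, and_true,
      det_signlessLapMatrix_of_allCompsOddUnicyclic R H hH]
  · have not_mem : ¬(H ≤ G ∧ AllCompsOddUnicyclic H) := fun h ↦ hH h.2
    rw [if_neg not_mem, ite_eq_right_iff]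
    exact fun h ↦ det_signlessLapMatrix_of_not_allCompsOddUnicyclic R H h.2 hH

end SignlessLaplacian

end Graphs

open scoped Classical in
/-- The determinant of the signless Laplacian `Q = D + A` equals
`Σ_H 4^{ω(H)}`, summed over the spanning subgraphs `H` of `G` all of whose
components are odd-unicyclic, where `ω(H)` is the number of components. -/
theorem stmt_13 {V : Type} [Fintype V] [DecidableEq V]
    (G : SimpleGraph V) [DecidableRel G.Adj] :
    (Matrix.diagonal (fun v => (G.degree v : ℤ)) + G.adjMatrix ℤ).det =
      ∑ H : SimpleGraph V,
        if H ≤ G ∧ AllCompsOddUnicyclic H then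
          (4 : ℤ) ^ (Nat.card H.ConnectedComponent) else 0 :=
  stmt_13_general ℤ G
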